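/- arXiv:2303.13687 — 4 statements merged into one kernel-verified Lean document; each statement's English description precedes it below -/
import Mathlib

section
/- Let I be the ideal of R = ℚ[x,y,z] generated by z², xz, y², xy, x³. Then I has height 3, the minimal number of generators of I is 5, and the quotient ring R/I is a finite-dimensional ℚ-vector space. -/
/-!
The ideal `I` is the monomial ideal on `z², xz, y², xy, x³`, and it contains a power of each variable.

* Height: a prime containing `I` contains `x, y, z`, so it is the maximal ideal `(x, y, z)`, the
  kernel of evaluation at the origin. It sits on top of the chain `0 < (x) < (x, y) < (x, y, z)`,
  realized by kernels of substitutions, and its height is at most `dim ℚ[x,y,z] = 3`.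
* Number of generators: the five exponents form an antichain for divisibility. For such a monomial
  ideal, the map `L` reading off the coefficients at these exponents satisfies
  `L (g * f) = g(0) • L f` for `f ∈ I` (`coeff_mul_of_mem_span_monomial`), so the images under `L` of
  any generating set span `ℚ⁵` (`card_le_card_of_span_monomial`).
* Finiteness: the classes of the variables are nilpotent, hence integral over `ℚ`, so the finite
  type algebra `R ⧸ I` is integral, hence finite, over `ℚ`.
-/

open MvPolynomial

/-- The height of an ideal: the infimum of the heights of prime ideals containing it. -/
noncomputable def idealHeight {R : Type*} [CommRing R] (I : Ideal R) : ℕ∞ :=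
  ⨅ p ∈ {p : PrimeSpectrum R | I ≤ p.asIdeal}, Order.height p

/-- The minimal number of generators of an ideal: the smallest cardinality of a
set of elements of the ring generating it as an ideal. -/
noncomputable def minNumGens {R : Type*} [CommRing R] (I : Ideal R) : ℕ :=
  sInf {n : ℕ | ∃ s : Finset R, s.card = n ∧ Ideal.span (s : Set R) = I}

noncomputable abbrev x : MvPolynomial (Fin 3) ℚ := X 0
noncomputable abbrev y : MvPolynomial (Fin 3) ℚ := X 1
noncomputable abbrev z : MvPolynomial (Fin 3) ℚ := X 2

section MonomialIdeal

variable {σ ι K : Type*} [Field K]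

/-- All proper divisors of a minimal generator `X ^ e i` lie outside the monomial ideal, so only the
constant term of `g` contributes to the coefficient of `g * f` at `e i`. -/
lemma coeff_mul_of_mem_span_monomial (e : ι → σ →₀ ℕ) (he : ∀ i j, e i ≤ e j → i = j)
    {f : MvPolynomial σ K}
    (hf : f ∈ Ideal.span ((fun s => monomial s (1 : K)) '' Set.range e))
    (g : MvPolynomial σ K) (i : ι) :
    coeff (e i) (g * f) = constantCoeff g * coeff (e i) f := by
  classical
  rw [mem_ideal_span_monomial_image] at hf
  rw [coeff_mul, Finset.sum_eq_single (0, e i)]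
  · rfl
  · rintro ⟨a, b⟩ hab hne
    rw [Finset.HasAntidiagonal.mem_antidiagonal] at hab
    by_cases hb : coeff b f = 0
    · simp [hb]
    · exfalso
      obtain ⟨_, ⟨j, rfl⟩, hj⟩ := hf b (mem_support_iff.mpr hb)
      have hbi : b ≤ e i := hab ▸ le_add_self
      obtain rfl := he j i (hj.trans hbi)
      obtain rfl : b = e j := le_antisymm hbi hj
      exact hne (by simpa using hab)
  · simp

/-- A generating set of a monomial ideal has at least as many elements as there are minimal
monomial generators. -/
lemma card_le_card_of_span_monomial [Fintype ι] (e : ι → σ →₀ ℕ)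
    (he : ∀ i j, e i ≤ e j → i = j) (t : Finset (MvPolynomial σ K))
    (ht : Ideal.span (t : Set (MvPolynomial σ K)) =
      Ideal.span ((fun s => monomial s (1 : K)) '' Set.range e)) :
    Fintype.card ι ≤ t.card := by
  classical
  let L : MvPolynomial σ K →ₗ[K] (ι → K) := LinearMap.pi fun i => lcoeff K (e i)
  have hL : ∀ f ∈ Ideal.span (t : Set (MvPolynomial σ K)),
      L f ∈ Submodule.span K ((t.image L : Finset (ι → K)) : Set (ι → K)) := by
    intro f hf
    induction hf using Submodule.span_induction with
    | mem f hf => exact Submodule.subset_span (by simpa using ⟨f, hf, rfl⟩)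
    | zero => simp
    | add f g _ _ hf hg => rw [map_add]; exact add_mem hf hg
    | smul g f hmem hf =>
      have : L (g • f) = constantCoeff g • L f := by
        ext i
        exact coeff_mul_of_mem_span_monomial e he (ht ▸ hmem) g i
      rw [this]
      exact Submodule.smul_mem _ _ hf
  have htop : Submodule.span K ((t.image L : Finset (ι → K)) : Set (ι → K)) = ⊤ := by
    rw [eq_top_iff, ← (Pi.basisFun K ι).span_eq, Submodule.span_le]
    rintro _ ⟨i, rfl⟩
    have hi := hL (monomial (e i) 1) (ht ▸ Ideal.subset_span ⟨_, ⟨i, rfl⟩, rfl⟩)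
    have : L (monomial (e i) 1) = Pi.basisFun K ι i := by
      ext j
      have : e i = e j ↔ j = i := ⟨fun h => (he _ _ h.le).symm, fun h => h ▸ rfl⟩
      simp [L, lcoeff_apply, coeff_monomial, Pi.single_apply, this]
    exact this ▸ hi
  have h := finrank_span_finset_le_card (R := K) (t.image L)
  rw [Set.finrank, htop, finrank_top, Module.finrank_fintype_fun_eq_card] at h
  exact h.trans Finset.card_image_le

end MonomialIdeal

/-- The exponents of the generators `z², xz, y², xy, x³`. -/
noncomputable def genExp (i : Fin 5) : Fin 3 →₀ ℕ :=
  Finsupp.equivFunOnFinite.symm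
    ((![![0, 0, 2], ![1, 0, 1], ![0, 2, 0], ![1, 1, 0], ![3, 0, 0]] : Fin 5 → Fin 3 → ℕ) i)

lemma genExp_antichain (i j : Fin 5) (h : genExp i ≤ genExp j) : i = j := by
  have h' : ∀ k, (![![0, 0, 2], ![1, 0, 1], ![0, 2, 0], ![1, 1, 0], ![3, 0, 0]] :
      Fin 5 → Fin 3 → ℕ) i k ≤ (![![0, 0, 2], ![1, 0, 1], ![0, 2, 0], ![1, 1, 0], ![3, 0, 0]] :
      Fin 5 → Fin 3 → ℕ) j k := fun k => h k
  clear h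
  revert i j
  decide

lemma gens_eq : ({z^2, x*z, y^2, x*y, x^3} : Set (MvPolynomial (Fin 3) ℚ)) =
    (fun s => monomial s (1 : ℚ)) '' Set.range genExp := by
  rw [← Set.range_comp]
  have h : ∀ i, ((fun s => monomial s (1 : ℚ)) ∘ genExp) i =
      (![z^2, x*z, y^2, x*y, x^3] : Fin 5 → MvPolynomial (Fin 3) ℚ) i := by
    intro i
    rw [Function.comp_apply, monomial_eq, Finsupp.prod_fintype _ _ (by simp)]
    fin_cases i <;> simp [genExp, Fin.prod_univ_three]
  rw [funext h]
  simp only [Matrix.range_cons, Matrix.range_empty, Set.union_empty, Set.singleton_union]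

/-- A prime containing all the variables is the kernel of evaluation at the origin. -/
lemma eq_ker_of_X_mem (p : Ideal (MvPolynomial (Fin 3) ℚ)) [hp : p.IsPrime]
    (h : ∀ i, (X i : MvPolynomial (Fin 3) ℚ) ∈ p) :
    p = RingHom.ker (constantCoeff (σ := Fin 3) (R := ℚ)) := by
  have hmax : (RingHom.ker (constantCoeff (σ := Fin 3) (R := ℚ))).IsMaximal :=
    RingHom.ker_isMaximal_of_surjective _ fun q => ⟨C q, by simp⟩
  refine (hmax.eq_of_le hp.ne_top fun f hf => ?_).symm
  have h1 : Ideal.Quotient.mkₐ ℚ p = (aeval 0 : MvPolynomial (Fin 3) ℚ →ₐ[ℚ] _) := by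
    ext i
    simpa using Ideal.Quotient.eq_zero_iff_mem.mpr (h i)
  have h2 : Ideal.Quotient.mkₐ ℚ p f = 0 := by
    rw [h1, aeval_zero, RingHom.mem_ker.mp hf, map_zero]
  exact Ideal.Quotient.eq_zero_iff_mem.mp h2

/-- The maximal ideal at the origin has height at least `3`, by the chain
`0 < (x) < (x, y) < (x, y, z)`. -/
lemma three_le_height (p : PrimeSpectrum (MvPolynomial (Fin 3) ℚ))
    (hp : p.asIdeal = RingHom.ker (constantCoeff (σ := Fin 3) (R := ℚ))) :
    3 ≤ Order.height p := by
  let a : MvPolynomial (Fin 3) ℚ →ₐ[ℚ] MvPolynomial (Fin 3) ℚ := aeval ![0, X 1, X 2]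
  let b : MvPolynomial (Fin 3) ℚ →ₐ[ℚ] MvPolynomial (Fin 3) ℚ := aeval ![0, 0, X 2]
  let P1 : PrimeSpectrum (MvPolynomial (Fin 3) ℚ) := ⟨RingHom.ker a, RingHom.ker_isPrime _⟩
  let P2 : PrimeSpectrum (MvPolynomial (Fin 3) ℚ) := ⟨RingHom.ker b, RingHom.ker_isPrime _⟩
  have hba : b.comp a = b := by
    ext i : 1
    fin_cases i <;> simp [a, b]
  have hcb : ∀ f, constantCoeff (b f) = constantCoeff f := by
    intro f
    have : (aeval 0 : MvPolynomial (Fin 3) ℚ →ₐ[ℚ] ℚ).comp b = aeval 0 := by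
      ext i : 1
      fin_cases i <;> simp [b]
    simpa [aeval_zero] using DFunLike.congr_fun this f
  have h01 : (⊥ : PrimeSpectrum (MvPolynomial (Fin 3) ℚ)) < P1 := by
    refine bot_lt_iff_ne_bot.mpr fun h => ?_
    have hx : (X 0 : MvPolynomial (Fin 3) ℚ) ∈ P1.asIdeal := by
      change a (X 0) = 0
      simp [a]
    rw [h] at hx
    simp at hx
  have h12 : P1 < P2 := by
    refine lt_of_le_of_ne (fun f hf => ?_) fun h => ?_
    · change b f = 0
      have hf : a f = 0 := hf
      rw [← hba, AlgHom.comp_apply, hf, map_zero]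
    · have hy : (X 1 : MvPolynomial (Fin 3) ℚ) ∈ P2.asIdeal := by
        change b (X 1) = 0
        simp [b]
      rw [← h] at hy
      have hy : a (X 1) = 0 := hy
      simp [a] at hy
  have h23 : P2 < p := by
    refine lt_of_le_of_ne (fun f hf => ?_) fun h => ?_
    · have hf : b f = 0 := hf
      change f ∈ p.asIdeal
      rw [hp, RingHom.mem_ker, ← hcb, hf, map_zero]
    · have hz : (X 2 : MvPolynomial (Fin 3) ℚ) ∈ p.asIdeal := by
        rw [hp]; simp [RingHom.mem_ker]
      rw [← h] at hz
      have hz : b (X 2) = 0 := hz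
      simp [b] at hz
  have e1 := Order.height_add_one_le h01
  have e2 := Order.height_add_one_le h12
  have e3 := Order.height_add_one_le h23
  calc (3 : ℕ∞) = 0 + 1 + 1 + 1 := by norm_num
    _ ≤ Order.height (⊥ : PrimeSpectrum (MvPolynomial (Fin 3) ℚ)) + 1 + 1 + 1 := by
      gcongr; exact zero_le
    _ ≤ Order.height P1 + 1 + 1 := by gcongr
    _ ≤ Order.height P2 + 1 := by gcongr
    _ ≤ _ := e3

theorem stmt_0 (I : Ideal (MvPolynomial (Fin 3) ℚ))
    (hI : I = Ideal.span {z^2, x*z, y^2, x*y, x^3}) :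
    idealHeight I = 3 ∧ minNumGens I = 5 ∧
    FiniteDimensional ℚ (MvPolynomial (Fin 3) ℚ ⧸ I) := by
  classical
  have hpow : ∀ i, (X i : MvPolynomial (Fin 3) ℚ) ^ 3 ∈ I := by
    have hx : x ^ 3 ∈ I := hI ▸ Ideal.subset_span (by simp)
    have hy : y ^ 2 ∈ I := hI ▸ Ideal.subset_span (by simp)
    have hz : z ^ 2 ∈ I := hI ▸ Ideal.subset_span (by simp)
    intro i
    fin_cases i
    · exact hx
    · exact I.pow_mem_of_pow_mem hy (by norm_num)
    · exact I.pow_mem_of_pow_mem hz (by norm_num)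
  have hIe : I = Ideal.span ((fun s => monomial s (1 : ℚ)) '' Set.range genExp) := by
    rw [hI, gens_eq]
  refine ⟨le_antisymm ?_ ?_, le_antisymm ?_ ?_, ?_⟩
  · let m : PrimeSpectrum (MvPolynomial (Fin 3) ℚ) :=
      ⟨RingHom.ker (constantCoeff (σ := Fin 3) (R := ℚ)), RingHom.ker_isPrime _⟩
    have hm : I ≤ m.asIdeal := by
      rw [hI, Ideal.span_le]
      rintro f (rfl | rfl | rfl | rfl | rfl) <;> simp [m, RingHom.mem_ker]
    refine (iInf₂_le m hm).trans ?_
    have hd : ringKrullDim (MvPolynomial (Fin 3) ℚ) = 3 := by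
      simp [MvPolynomial.ringKrullDim_of_isNoetherianRing]
    have := Order.height_le_krullDim m
    rw [← ringKrullDim, hd] at this
    exact WithBot.coe_le_coe.mp this
  · refine le_iInf₂ fun p hp => three_le_height p ?_
    have := p.isPrime
    exact eq_ker_of_X_mem p.asIdeal fun i => p.isPrime.mem_of_pow_mem 3 (hp (hpow i))
  · -- `Finset.card_le_five` makes it unnecessary to check that the generators are distinct
    have hspan : Ideal.span (({z^2, x*z, y^2, x*y, x^3} : Finset (MvPolynomial (Fin 3) ℚ)) :
        Set (MvPolynomial (Fin 3) ℚ)) = I := by simp [hI]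
    have hle : minNumGens I ≤ _ := Nat.sInf_le ⟨_, rfl, hspan⟩
    exact hle.trans Finset.card_le_five
  · refine le_csInf ⟨_, {z^2, x*z, y^2, x*y, x^3}, rfl, by simp [hI]⟩ ?_
    rintro n ⟨t, rfl, ht⟩
    simpa using card_le_card_of_span_monomial genExp genExp_antichain t (ht.trans hIe)
  · have hint : Algebra.IsIntegral ℚ (MvPolynomial (Fin 3) ℚ ⧸ I) := by
      refine ⟨fun q => ?_⟩
      obtain ⟨f, rfl⟩ := Ideal.Quotient.mk_surjective q
      induction f using MvPolynomial.induction_on with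
      | C c => exact isIntegral_algebraMap (R := ℚ) (x := c)
      | add f g hf hg => rw [map_add]; exact hf.add hg
      | mul_X f i hf =>
        rw [map_mul]
        refine hf.mul (IsIntegral.of_pow (n := 3) (by norm_num) ?_)
        rw [← map_pow, Ideal.Quotient.eq_zero_iff_mem.mpr (hpow i)]
        exact isIntegral_zero
    exact Algebra.IsIntegral.finite
end

section
/- Let I be the ideal of R = ℚ[x,y,z] generated by xz² + z³, y²z, y³ − z³, x²y, x³ − z³. Then I has height 3, the minimal number of generators of I is 5, and the quotient ring R/I is a finite-dimensional ℚ-vector space. -/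
/-!
Modulo `I` one has `z⁶ = y³z³ = 0`, `x⁶ = z⁶ = 0` and `y⁵ = y²z³ = 0`, so the three variables are
nilpotent in the quotient. Hence the quotient is a finitely generated integral `ℚ`-algebra, so it is
finite-dimensional, and every prime over `I` contains `(x, y, z)`, whose height is `3`: the chain
`0 ⊂ (x) ⊂ (x, y) ⊂ (x, y, z)` gives one inequality and `dim ℚ[x, y, z] = 3` the other.

For the number of generators, all elements of `I` have order at least `3`, so on `I` the vector of
coefficients at the five monomials `xz², y²z, y³, x²y, x³` satisfies `L (r f) = r(0) L f`. Thus `L`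
sends a generating set of `I` to a spanning set of `L(I)`. The five given generators are sent to the
standard basis of `ℚ⁵`, so at least five generators are needed.
-/

open MvPolynomial

/-- The endomorphism of `ℚ[x, y, z]` that sets the first `k` variables to zero. -/
noncomputable def killVars (k : ℕ) :
    MvPolynomial (Fin 3) ℚ →ₐ[ℚ] MvPolynomial (Fin 3) ℚ :=
  aeval fun i => if (i : ℕ) < k then 0 else X i

lemma killVars_X (k : ℕ) (i : Fin 3) :
    killVars k (X i) = if (i : ℕ) < k then 0 else X i := by
  simp [killVars]

/-- The prime ideal generated by the first `k` variables, as the kernel of `killVars k`. -/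
noncomputable def varPrime (k : ℕ) : PrimeSpectrum (MvPolynomial (Fin 3) ℚ) :=
  ⟨RingHom.ker (killVars k), RingHom.ker_isPrime _⟩

lemma mem_varPrime {k : ℕ} {f : MvPolynomial (Fin 3) ℚ} :
    f ∈ (varPrime k).asIdeal ↔ killVars k f = 0 := Iff.rfl

lemma varPrime_lt (k : Fin 3) : varPrime k < varPrime (k + 1) := by
  have hcomp : (killVars (k + 1)).comp (killVars k) = killVars (k + 1) := by
    ext1 i
    simp only [AlgHom.comp_apply, killVars_X]
    split_ifs with h1 h2
    · simp
    · omega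
    · simp [killVars_X, *]
    · simp [killVars_X, *]
  refine lt_of_le_not_ge ?_ ?_
  · intro f hf
    rw [mem_varPrime] at hf ⊢
    rw [← hcomp, AlgHom.comp_apply, hf, map_zero]
  · intro h
    have hX : X k ∈ (varPrime (k + 1)).asIdeal := by
      rw [mem_varPrime, killVars_X, if_pos (Nat.lt_succ_self _)]
    have := h hX
    rw [mem_varPrime, killVars_X, if_neg (lt_irrefl _)] at this
    exact X_ne_zero k this

lemma three_le_height_varPrime : 3 ≤ Order.height (varPrime 3) := by
  have h0 := Order.height_add_one_le (varPrime_lt 0)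
  have h1 := Order.height_add_one_le (varPrime_lt 1)
  have h2 := Order.height_add_one_le (varPrime_lt 2)
  calc (3 : ℕ∞) = 0 + 1 + 1 + 1 := by norm_num
    _ ≤ Order.height (varPrime 0) + 1 + 1 + 1 := by gcongr; exact zero_le
    _ ≤ Order.height (varPrime 1) + 1 + 1 := by gcongr; exact h0
    _ ≤ Order.height (varPrime 2) + 1 := by gcongr; exact h1
    _ ≤ Order.height (varPrime 3) := h2

lemma height_le_three (p : PrimeSpectrum (MvPolynomial (Fin 3) ℚ)) : Order.height p ≤ 3 := by
  have h := Order.height_le_krullDim p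
  have h' : ringKrullDim (MvPolynomial (Fin 3) ℚ) = 3 := by simp
  rw [show Order.krullDim _ = _ from h'] at h
  exact WithBot.coe_le_coe.1 h

lemma varPrime_three_le (p : PrimeSpectrum (MvPolynomial (Fin 3) ℚ))
    (hp : ∀ i, X i ∈ p.asIdeal) : varPrime 3 ≤ p := by
  intro f hf
  rw [mem_varPrime] at hf
  have hcomp : (Ideal.Quotient.mkₐ ℚ p.asIdeal).comp (killVars 3) =
      Ideal.Quotient.mkₐ ℚ p.asIdeal := by
    ext1 i
    rw [AlgHom.comp_apply, killVars_X, if_pos i.isLt, map_zero]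
    exact (Ideal.Quotient.eq_zero_iff_mem.2 (hp i)).symm
  have h := DFunLike.congr_fun hcomp f
  rw [AlgHom.comp_apply, hf, map_zero] at h
  exact Ideal.Quotient.eq_zero_iff_mem.1 h.symm

/-- The ideal `(xz² + z³, y²z, y³ - z³, x²y, x³ - z³)` of `ℚ[x, y, z]`. -/
noncomputable abbrev theIdeal : Ideal (MvPolynomial (Fin 3) ℚ) :=
  Ideal.span {x*z^2 + z^3, y^2*z, y^3 - z^3, x^2*y, x^3 - z^3}

lemma X_pow_mem (i : Fin 3) : (X i : MvPolynomial (Fin 3) ℚ) ^ 6 ∈ theIdeal := by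
  have h2 : y^2*z ∈ theIdeal := Ideal.subset_span (by simp)
  have h3 : y^3 - z^3 ∈ theIdeal := Ideal.subset_span (by simp)
  have h5 : x^3 - z^3 ∈ theIdeal := Ideal.subset_span (by simp)
  have hz : z^6 ∈ theIdeal := by
    have := sub_mem (theIdeal.mul_mem_left (y*z^2) h2) (theIdeal.mul_mem_left (z^3) h3)
    convert this using 1
    ring
  have hy : y^6 ∈ theIdeal := by
    have := add_mem hz (theIdeal.mul_mem_left (y^3 + z^3) h3)
    convert this using 1
    ring
  have hx : x^6 ∈ theIdeal := by
    have := add_mem hz (theIdeal.mul_mem_left (x^3 + z^3) h5)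
    convert this using 1
    ring
  fin_cases i
  exacts [hx, hy, hz]

lemma theIdeal_le_varPrime : theIdeal ≤ (varPrime 3).asIdeal := by
  rw [Ideal.span_le]
  intro f hf
  simp only [Set.mem_insert_iff, Set.mem_singleton_iff] at hf
  rw [SetLike.mem_coe, mem_varPrime]
  rcases hf with rfl | rfl | rfl | rfl | rfl <;> simp [killVars_X]

lemma idealHeight_theIdeal : idealHeight theIdeal = 3 := by
  apply le_antisymm
  · exact (iInf₂_le (varPrime 3) theIdeal_le_varPrime).trans (height_le_three _)
  · refine le_iInf₂ fun p hp => three_le_height_varPrime.trans (Order.height_mono ?_)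
    exact varPrime_three_le p fun i => p.isPrime.mem_of_pow_mem 6 (hp (X_pow_mem i))

lemma finite_quotient : FiniteDimensional ℚ (MvPolynomial (Fin 3) ℚ ⧸ theIdeal) := by
  have hint : Algebra.IsIntegral ℚ (MvPolynomial (Fin 3) ℚ ⧸ theIdeal) := by
    refine ⟨fun a => ?_⟩
    obtain ⟨f, rfl⟩ := Ideal.Quotient.mk_surjective a
    induction f using MvPolynomial.induction_on with
    | C r => exact isIntegral_algebraMap (R := ℚ) (x := r)
    | add p q hp hq => rw [map_add]; exact hp.add hq
    | mul_X p i hp =>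
      rw [map_mul]
      refine hp.mul (IsIntegral.of_pow (n := 6) (by norm_num) ?_)
      rw [← map_pow, Ideal.Quotient.eq_zero_iff_mem.2 (X_pow_mem i)]
      exact isIntegral_zero
  exact Algebra.IsIntegral.finite

/-- The exponents of the monomials `xz², y²z, y³, x²y, x³`. -/
noncomputable def cubicExp : Fin 5 → (Fin 3 →₀ ℕ) :=
  ![.single 0 1 + .single 2 2, .single 1 2 + .single 2 1, .single 1 3,
    .single 0 2 + .single 1 1, .single 0 3]

lemma degree_cubicExp (j : Fin 5) : (cubicExp j).degree = 3 := by
  fin_cases j <;> simp [cubicExp]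

/-- The coefficients of a polynomial at the monomials `xz², y²z, y³, x²y, x³`. -/
noncomputable def cubicCoeffs : MvPolynomial (Fin 3) ℚ →ₗ[ℚ] (Fin 5 → ℚ) :=
  LinearMap.pi fun j => lcoeff ℚ (cubicExp j)

lemma cubicCoeffs_apply (f : MvPolynomial (Fin 3) ℚ) (j : Fin 5) :
    cubicCoeffs f j = coeff (cubicExp j) f := rfl

/-- The lowest-degree coefficients of a multiple of `f` only involve the constant term of the
other factor. -/
lemma coeff_mul_of_order {n : ℕ} (r f : MvPolynomial (Fin 3) ℚ)
    (hf : ∀ d : Fin 3 →₀ ℕ, d.degree < n → coeff d f = 0) (d : Fin 3 →₀ ℕ) (hd : d.degree ≤ n) :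
    coeff d (r * f) = coeff 0 r * coeff d f := by
  classical
  rw [coeff_mul, Finset.sum_eq_single (0, d)]
  · rintro ⟨a, b⟩ hab hne
    rw [Finset.HasAntidiagonal.mem_antidiagonal] at hab
    dsimp only at hab ⊢
    have ha : a ≠ 0 := by
      rintro rfl
      exact hne (by simpa using hab)
    have ha' : a.degree ≠ 0 := fun h => ha ((Finsupp.degree_eq_zero_iff a).1 h)
    rw [hf b, mul_zero]
    have := congrArg Finsupp.degree hab
    rw [map_add] at this
    omega
  · intro h
    simp at h

lemma coeff_eq_zero_of_mem {f : MvPolynomial (Fin 3) ℚ} (hf : f ∈ theIdeal) :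
    ∀ d : Fin 3 →₀ ℕ, d.degree < 3 → coeff d f = 0 := by
  induction hf using Submodule.span_induction with
  | zero => simp
  | add f g _ _ hf hg => intro d hd; rw [coeff_add, hf d hd, hg d hd, add_zero]
  | smul r f _ hf =>
    intro d hd
    rw [smul_eq_mul, coeff_mul_of_order r f hf d hd.le, hf d hd, mul_zero]
  | mem f hf =>
    intro d hd
    suffices h : f.IsHomogeneous 3 from h.coeff_eq_zero hd.ne
    have hX := isHomogeneous_X ℚ (σ := Fin 3)
    simp only [Set.mem_insert_iff, Set.mem_singleton_iff] at hf
    rcases hf with rfl | rfl | rfl | rfl | rfl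
    · exact ((hX 0).mul ((hX 2).pow 2)).add ((hX 2).pow 3)
    · exact ((hX 1).pow 2).mul (hX 2)
    · exact ((hX 1).pow 3).sub ((hX 2).pow 3)
    · exact ((hX 0).pow 2).mul (hX 1)
    · exact ((hX 0).pow 3).sub ((hX 2).pow 3)

lemma exists_cubicCoeffs_eq_single (j : Fin 5) : ∃ f ∈ theIdeal, cubicCoeffs f = Pi.single j 1 := by
  classical
  have hgen : ∀ f ∈ ({x*z^2 + z^3, y^2*z, y^3 - z^3, x^2*y, x^3 - z^3} : Set _), f ∈ theIdeal :=
    fun f hf => Ideal.subset_span hf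
  have key : ∀ f, (∀ i, coeff (cubicExp i) f = if i = j then 1 else 0) →
      cubicCoeffs f = Pi.single j 1 := by
    intro f hf
    ext i
    rw [cubicCoeffs_apply, hf, Pi.single_apply]
  fin_cases j
  · refine ⟨x*z^2 + z^3, hgen _ (by simp), key _ fun i => ?_⟩
    fin_cases i <;> simp [cubicExp, X, monomial_pow, monomial_mul, coeff_monomial,
      Finsupp.ext_iff, Fin.forall_fin_succ]
  · refine ⟨y^2*z, hgen _ (by simp), key _ fun i => ?_⟩
    fin_cases i <;> simp [cubicExp, X, monomial_pow, monomial_mul, coeff_monomial,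
      Finsupp.ext_iff, Fin.forall_fin_succ]
  · refine ⟨y^3 - z^3, hgen _ (by simp), key _ fun i => ?_⟩
    fin_cases i <;> simp [cubicExp, X, monomial_pow, coeff_monomial,
      Finsupp.ext_iff, Fin.forall_fin_succ]
  · refine ⟨x^2*y, hgen _ (by simp), key _ fun i => ?_⟩
    fin_cases i <;> simp [cubicExp, X, monomial_pow, monomial_mul, coeff_monomial,
      Finsupp.ext_iff, Fin.forall_fin_succ]
  · refine ⟨x^3 - z^3, hgen _ (by simp), key _ fun i => ?_⟩
    fin_cases i <;> simp [cubicExp, X, monomial_pow, coeff_monomial,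
      Finsupp.ext_iff, Fin.forall_fin_succ]

/-- A finite generating set of the ideal maps to a spanning set of `ℚ⁵`. -/
lemma five_le_card (s : Finset (MvPolynomial (Fin 3) ℚ))
    (hs : Ideal.span (s : Set (MvPolynomial (Fin 3) ℚ)) = theIdeal) : 5 ≤ s.card := by
  classical
  have hmem : ∀ f ∈ theIdeal,
      cubicCoeffs f ∈ Submodule.span ℚ (s.image cubicCoeffs : Set (Fin 5 → ℚ)) := by
    intro f hf
    rw [← hs] at hf
    induction hf using Submodule.span_induction with
    | zero => simp
    | add f g _ _ hf hg => rw [map_add]; exact add_mem hf hg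
    | mem f hf => exact Submodule.subset_span (by simpa using ⟨f, hf, rfl⟩)
    | smul r f hfs hf =>
      have hf' : f ∈ theIdeal := hs ▸ hfs
      have : cubicCoeffs (r • f) = coeff 0 r • cubicCoeffs f := by
        ext j
        rw [Pi.smul_apply, cubicCoeffs_apply, cubicCoeffs_apply, smul_eq_mul, smul_eq_mul,
          coeff_mul_of_order r f (coeff_eq_zero_of_mem hf') _ (degree_cubicExp j).le]
      rw [this]
      exact Submodule.smul_mem _ _ hf
  have htop : Submodule.span ℚ (s.image cubicCoeffs : Set (Fin 5 → ℚ)) = ⊤ := by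
    rw [eq_top_iff, ← (Pi.basisFun ℚ (Fin 5)).span_eq, Submodule.span_le]
    rintro _ ⟨j, rfl⟩
    obtain ⟨f, hf, hfj⟩ := exists_cubicCoeffs_eq_single j
    rw [Pi.basisFun_apply, ← hfj]
    exact hmem f hf
  have h := finrank_span_finset_le_card (R := ℚ) (s.image cubicCoeffs)
  rw [Set.finrank, htop, finrank_top, Module.finrank_fin_fun] at h
  exact h.trans Finset.card_image_le

lemma minNumGens_theIdeal : minNumGens theIdeal = 5 := by
  classical
  let t : Finset (MvPolynomial (Fin 3) ℚ) :=
    {x*z^2 + z^3, y^2*z, y^3 - z^3, x^2*y, x^3 - z^3}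
  have ht : Ideal.span (t : Set (MvPolynomial (Fin 3) ℚ)) = theIdeal := by simp [t]
  apply le_antisymm
  · have hle : minNumGens theIdeal ≤ t.card := Nat.sInf_le ⟨t, rfl, ht⟩
    exact hle.trans Finset.card_le_five
  · refine le_csInf ⟨_, t, rfl, ht⟩ ?_
    rintro n ⟨s, rfl, hs⟩
    exact five_le_card s hs

theorem stmt_4 (I : Ideal (MvPolynomial (Fin 3) ℚ))
    (hI : I = Ideal.span {x*z^2 + z^3, y^2*z, y^3 - z^3, x^2*y, x^3 - z^3}) :
    idealHeight I = 3 ∧ minNumGens I = 5 ∧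
    FiniteDimensional ℚ (MvPolynomial (Fin 3) ℚ ⧸ I) := by
  subst hI
  exact ⟨idealHeight_theIdeal, minNumGens_theIdeal, finite_quotient⟩
end

section
/- Let I be the ideal of R = ℚ[x,y,z] generated by yz, xz, xy, z³, x³, y⁴. Then I has height 3, the minimal number of generators of I is 6, and the quotient ring R/I is a finite-dimensional ℚ-vector space. -/
/-!
The three claims are handled separately.

*Height.* A prime `p ⊇ I` contains powers of all three variables, hence the variables themselves.
The ideals `killIdeal k = (X₀, …, X_{k-1})`, for `k = 0, 1, 2, 3`, form a strict chain of primes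
whose last member lies in `p`, so `p` has height at least `3`; the Krull dimension of
`ℚ[x,y,z]` bounds it above by `3`.

*Generators.* Let `coeffs` record the coefficients of a polynomial at the six generating monomials.
No generating monomial divides another one, so `coeffs (r * g) = r(0) • coeffs g` for all `g ∈ I`
(`coeffs_mul`). Thus a generating set of `I` is sent to a spanning set of `ℚ⁶`, and has at
least six elements.

*Finiteness.* The quotient is generated as a `ℚ`-algebra by three nilpotent, hence integral,
elements.
-/

open MvPolynomial

namespace Stmt7

/-- The endomorphism of `ℚ[x,y,z]` that sends the first `k` variables to `0` and fixes the rest. -/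
noncomputable def killHom (k : ℕ) : MvPolynomial (Fin 3) ℚ →ₐ[ℚ] MvPolynomial (Fin 3) ℚ :=
  aeval fun i : Fin 3 => if i.val < k then 0 else X i

/-- The prime ideal generated by the first `k` variables, realised as a kernel so that primality is
immediate. -/
noncomputable def killIdeal (k : ℕ) : PrimeSpectrum (MvPolynomial (Fin 3) ℚ) :=
  ⟨RingHom.ker (killHom k), RingHom.ker_isPrime _⟩

lemma mem_killIdeal {k : ℕ} {f : MvPolynomial (Fin 3) ℚ} :
    f ∈ (killIdeal k).asIdeal ↔ killHom k f = 0 := Iff.rfl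

lemma killIdeal_lt {k : ℕ} (hk : k < 3) : killIdeal k < killIdeal (k + 1) := by
  have hcomp : (killHom (k + 1)).comp (killHom k) = killHom (k + 1) := by
    apply MvPolynomial.algHom_ext
    intro i
    by_cases h : i.val < k
    · simp [killHom, h, show ¬ k < i.val by omega]
    · simp [killHom, h]
  refine lt_of_le_of_ne ?_ ?_
  · intro f hf
    rw [mem_killIdeal] at hf ⊢
    rw [← hcomp, AlgHom.comp_apply, hf, map_zero]
  · intro h
    have h1 : (X ⟨k, hk⟩ : MvPolynomial (Fin 3) ℚ) ∈ (killIdeal (k + 1)).asIdeal := by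
      simp [mem_killIdeal, killHom]
    rw [← h] at h1
    simp [mem_killIdeal, killHom] at h1

lemma le_height_killIdeal (k : ℕ) (hk : k ≤ 3) : (k : ℕ∞) ≤ Order.height (killIdeal k) := by
  induction k with
  | zero => simp
  | succ k ih =>
    have h := Order.height_add_one_le (killIdeal_lt (show k < 3 by omega))
    push_cast
    exact le_trans (by gcongr; exact ih (by omega)) h

lemma killIdeal_le {p : PrimeSpectrum (MvPolynomial (Fin 3) ℚ)}
    (hp : ∀ i, X i ∈ p.asIdeal) : killIdeal 3 ≤ p := by
  -- Killing all the variables does not change a polynomial modulo `p`.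
  have hcomp : (Ideal.Quotient.mkₐ ℚ p.asIdeal).comp (killHom 3) =
      Ideal.Quotient.mkₐ ℚ p.asIdeal := by
    apply MvPolynomial.algHom_ext
    intro i
    have := Ideal.Quotient.eq_zero_iff_mem.mpr (hp i)
    simp [killHom, this]
  intro f hf
  rw [mem_killIdeal] at hf
  have h := DFunLike.congr_fun hcomp f
  rw [AlgHom.comp_apply, hf, map_zero] at h
  exact Ideal.Quotient.eq_zero_iff_mem.mp h.symm

/-- The exponent vectors of the six generators `yz, xz, xy, z³, x³, y⁴`. -/
noncomputable def expo (i : Fin 6) : Fin 3 →₀ ℕ :=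
  Finsupp.equivFunOnFinite.symm
    ((![![0, 1, 1], ![1, 0, 1], ![1, 1, 0], ![0, 0, 3], ![3, 0, 0], ![0, 4, 0]] :
      Fin 6 → Fin 3 → ℕ) i)

/-- The generating monomials form an antichain for divisibility. -/
lemma expo_antichain {i j : Fin 6} (h : expo j ≤ expo i) : j = i := by
  have h' : ∀ a : Fin 3, (![![0, 1, 1], ![1, 0, 1], ![1, 1, 0], ![0, 0, 3], ![3, 0, 0],
      ![0, 4, 0]] : Fin 6 → Fin 3 → ℕ) j a ≤ (![![0, 1, 1], ![1, 0, 1], ![1, 1, 0], ![0, 0, 3],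
      ![3, 0, 0], ![0, 4, 0]] : Fin 6 → Fin 3 → ℕ) i a := fun a => h a
  clear h
  revert i j
  decide

/-- The `i`-th generator, as a monomial. -/
noncomputable def gen (i : Fin 6) : MvPolynomial (Fin 3) ℚ := monomial (expo i) 1

lemma gen_injective : Function.Injective gen := by
  intro i j h
  have h' : expo i = expo j := by
    simpa [gen, MvPolynomial.monomial_left_inj] using h
  exact expo_antichain h'.le

lemma gen_eq (i : Fin 6) : gen i = ![y*z, x*z, x*y, z^3, x^3, y^4] i := by
  have h : gen i = X 0 ^ expo i 0 * X 1 ^ expo i 1 * X 2 ^ expo i 2 := by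
    rw [gen, MvPolynomial.monomial_eq, Finsupp.prod_fintype _ _ (by simp)]
    simp [Fin.prod_univ_three]
  rw [h]
  fin_cases i <;> simp [expo, x, y, z]

lemma range_gen :
    Set.range gen = {y*z, x*z, x*y, z^3, x^3, y^4} := by
  rw [show gen = ![y*z, x*z, x*y, z^3, x^3, y^4] from funext gen_eq]
  simp only [Matrix.range_cons, Matrix.range_empty, Set.union_empty, Set.singleton_union]

/-- The coefficients of a polynomial at the six generating monomials. -/
noncomputable def coeffs : MvPolynomial (Fin 3) ℚ →ₗ[ℚ] (Fin 6 → ℚ) :=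
  LinearMap.pi fun i => lcoeff ℚ (expo i)

lemma coeffs_apply (f : MvPolynomial (Fin 3) ℚ) (i : Fin 6) : coeffs f i = coeff (expo i) f := rfl

/-- On the ideal of the generators, `coeffs` factors through reduction modulo the maximal ideal at
the origin. The elements `g` with this property form an ideal, so it is enough to treat
the generators, for which it is the antichain property. -/
lemma coeffs_mul {g : MvPolynomial (Fin 3) ℚ} (hg : g ∈ Ideal.span (Set.range gen)) :
    ∀ r, coeffs (r * g) = constantCoeff r • coeffs g := by
  induction hg using Submodule.span_induction with
  | mem g hg =>
    obtain ⟨j, rfl⟩ := hg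
    intro r
    ext i
    rw [Pi.smul_apply, coeffs_apply, coeffs_apply, gen, coeff_mul_monomial', coeff_monomial]
    by_cases h : expo j ≤ expo i
    · obtain rfl := expo_antichain h
      simp [constantCoeff_eq]
    · have h' : expo j ≠ expo i := fun e => h e.le
      simp [h, h']
  | zero => simp
  | add f g _ _ hf hg =>
    intro r
    rw [mul_add, map_add, map_add, hf, hg, smul_add]
  | smul a g _ hg =>
    intro r
    rw [smul_eq_mul, ← mul_assoc, hg, hg, map_mul, mul_smul]

lemma coeffs_gen (i : Fin 6) : coeffs (gen i) = Pi.single i 1 := by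
  ext j
  rw [coeffs_apply, gen, coeff_monomial, Pi.single_apply]
  by_cases h : j = i
  · simp [h]
  · have h' : expo i ≠ expo j := fun e => h (expo_antichain e.le).symm
    simp [h, h']

lemma six_le_card {s : Finset (MvPolynomial (Fin 3) ℚ)}
    (hs : Ideal.span (s : Set (MvPolynomial (Fin 3) ℚ)) = Ideal.span (Set.range gen)) :
    6 ≤ s.card := by
  classical
  have key : ∀ g ∈ Ideal.span (s : Set (MvPolynomial (Fin 3) ℚ)),
      coeffs g ∈ Submodule.span ℚ ((s.image coeffs : Finset (Fin 6 → ℚ)) : Set (Fin 6 → ℚ)) := by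
    intro g hg
    induction hg using Submodule.span_induction with
    | mem g hg =>
      exact Submodule.subset_span (Finset.mem_coe.mpr (Finset.mem_image_of_mem _ hg))
    | zero => simp
    | add f g _ _ hf hg => rw [map_add]; exact add_mem hf hg
    | smul a g hg' hg =>
      rw [smul_eq_mul, coeffs_mul (hs ▸ hg')]
      exact Submodule.smul_mem _ _ hg
  have htop : Submodule.span ℚ ((s.image coeffs : Finset (Fin 6 → ℚ)) : Set (Fin 6 → ℚ)) = ⊤ := by
    rw [eq_top_iff, ← (Pi.basisFun ℚ (Fin 6)).span_eq, Submodule.span_le]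
    rintro _ ⟨i, rfl⟩
    rw [Pi.basisFun_apply, ← coeffs_gen]
    exact key _ (hs ▸ Ideal.subset_span ⟨i, rfl⟩)
  have h := finrank_span_finset_le_card (R := ℚ) (s.image coeffs)
  rw [Set.finrank, htop, finrank_top, Module.finrank_fin_fun] at h
  exact h.trans Finset.card_image_le

lemma X_pow_mem (i : Fin 3) :
    (X i : MvPolynomial (Fin 3) ℚ) ^ 4 ∈
      Ideal.span ({y*z, x*z, x*y, z^3, x^3, y^4} : Set (MvPolynomial (Fin 3) ℚ)) := by
  fin_cases i
  · exact Ideal.pow_mem_of_pow_mem _ (Ideal.subset_span (show x ^ 3 ∈ _ by simp)) (by norm_num)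
  · exact Ideal.subset_span (show y ^ 4 ∈ _ by simp)
  · exact Ideal.pow_mem_of_pow_mem _ (Ideal.subset_span (show z ^ 3 ∈ _ by simp)) (by norm_num)

lemma finite_quotient {I : Ideal (MvPolynomial (Fin 3) ℚ)} (hI : ∀ i, X i ^ 4 ∈ I) :
    FiniteDimensional ℚ (MvPolynomial (Fin 3) ℚ ⧸ I) := by
  have hint : Algebra.IsIntegral ℚ (MvPolynomial (Fin 3) ℚ ⧸ I) := by
    refine ⟨fun q => ?_⟩
    obtain ⟨f, rfl⟩ := Ideal.Quotient.mk_surjective q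
    induction f using MvPolynomial.induction_on with
    | C a => exact isIntegral_algebraMap (R := ℚ) (A := MvPolynomial (Fin 3) ℚ ⧸ I) (x := a)
    | add f g hf hg => rw [map_add]; exact hf.add hg
    | mul_X f i hf =>
      rw [map_mul]
      refine hf.mul (IsIntegral.of_pow (n := 4) (by norm_num) ?_)
      rw [← map_pow, Ideal.Quotient.eq_zero_iff_mem.mpr (hI i)]
      exact isIntegral_zero
  exact Algebra.IsIntegral.finite

end Stmt7

open Stmt7

theorem stmt_7 (I : Ideal (MvPolynomial (Fin 3) ℚ))
    (hI : I = Ideal.span {y*z, x*z, x*y, z^3, x^3, y^4}) :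
    idealHeight I = 3 ∧ minNumGens I = 6 ∧
    FiniteDimensional ℚ (MvPolynomial (Fin 3) ℚ ⧸ I) := by
  have hpow : ∀ i, (X i : MvPolynomial (Fin 3) ℚ) ^ 4 ∈ I := fun i => hI ▸ X_pow_mem i
  refine ⟨?_, ?_, finite_quotient hpow⟩
  · apply le_antisymm
    · have hmem : I ≤ (killIdeal 3).asIdeal := by
        rw [hI, Ideal.span_le]
        rintro f (rfl | rfl | rfl | rfl | rfl | rfl) <;>
          simp [mem_killIdeal, killHom, x, y, z]
      refine (iInf₂_le (killIdeal 3) hmem).trans ?_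
      have h := Order.height_le_krullDim (killIdeal 3)
      have hdim : Order.krullDim (PrimeSpectrum (MvPolynomial (Fin 3) ℚ)) = 3 := by
        have := MvPolynomial.ringKrullDim_of_isNoetherianRing (R := ℚ) (ι := Fin 3)
        rw [ringKrullDim_eq_zero_of_field] at this
        rw [← ringKrullDim, this]
        simp
      rw [hdim] at h
      exact WithBot.coe_le_coe.mp h
    · refine le_iInf₂ fun p hp => ?_
      have hX : ∀ i, X i ∈ p.asIdeal := fun i => p.isPrime.mem_of_pow_mem 4 (hp (hpow i))
      exact (le_height_killIdeal 3 le_rfl).trans (Order.height_mono (killIdeal_le hX))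
  · rw [← range_gen] at hI
    subst hI
    have hmem : 6 ∈ {n : ℕ | ∃ s : Finset (MvPolynomial (Fin 3) ℚ), s.card = n ∧
        Ideal.span (s : Set (MvPolynomial (Fin 3) ℚ)) = Ideal.span (Set.range gen)} :=
      ⟨Finset.univ.map ⟨gen, gen_injective⟩, by simp, by simp⟩
    refine le_antisymm (Nat.sInf_le hmem) (le_csInf ⟨6, hmem⟩ ?_)
    rintro n ⟨s, rfl, hs⟩
    exact six_le_card hs
end

section
/- Let I be the ideal of R = ℚ[x,y,z] generated by z³, y²z, x²z, y³, xy², x²y, x³ − yz². Then I has height 3, the minimal number of generators of I is 7, and the quotient ring R/I is a finite-dimensional ℚ-vector space. -/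
/-!
Write `m = (x, y, z)` and `R = ℚ[x, y, z]`.

*Height.* A prime containing `I` contains `z`, `y` (their cubes lie in `I`) and then `x`
(as `x³ = (x³ - yz²) + yz²`), so it sits on top of the chain `0 ⊂ (x) ⊂ (x, y) ⊂ (x, y, z)`
and has height at least `3`; it has height at most `3` because `dim R = 3`. The members of the
chain are realised as kernels of substitutions that set some of the variables to `0`, which makes
primality immediate.

*Number of generators.* All generators are in `m³`, and modulo `m⁴` multiplying an element of
`m³` by `a` is multiplying it by the scalar `a(0)` (`coeff_mul_of_mem`). Hence the `ℚ`-linear map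
`lead` reading off seven cubic coefficients sends any set of ideal generators of `I` to a
`ℚ`-spanning set of `lead(I)`. As `lead` maps the seven given generators to the standard basis
of `ℚ⁷`, no generating set has fewer than seven elements.

*Finite dimension.* `x⁵`, `y³`, `z³` lie in `I`, so `R/I` is integral and of finite type over `ℚ`.
-/

open MvPolynomial

/-- The exponent vector of the monomial `x ^ a * y ^ b * z ^ c`. -/
noncomputable def expo (a b c : ℕ) : Fin 3 →₀ ℕ := Finsupp.equivFunOnFinite.symm ![a, b, c]

lemma expo_inj {a b c a' b' c' : ℕ} :
    expo a b c = expo a' b' c' ↔ a = a' ∧ b = b' ∧ c = c' := by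
  simp [expo]

lemma degree_expo (a b c : ℕ) : (expo a b c).degree = a + b + c := by
  simp [expo, Finsupp.degree_eq_sum, Fin.sum_univ_three]

lemma monomial_expo (a b c : ℕ) :
    monomial (expo a b c) (1 : ℚ) = x ^ a * y ^ b * z ^ c := by
  rw [monomial_eq, Finsupp.prod_fintype _ _ (by simp)]
  simp [expo, Fin.prod_univ_three]

/-- The seven generators of the ideal. -/
noncomputable def gen : Fin 7 → MvPolynomial (Fin 3) ℚ :=
  ![z^3, y^2*z, x^2*z, y^3, x*y^2, x^2*y, x^3 - y*z^2]

/-- The exponents of `z³, y²z, x²z, y³, xy², x²y, x³`: each occurs in exactly one generator. -/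
noncomputable def leadExpo : Fin 7 → (Fin 3 →₀ ℕ) :=
  ![expo 0 0 3, expo 0 2 1, expo 2 0 1, expo 0 3 0, expo 1 2 0, expo 2 1 0, expo 3 0 0]

lemma range_gen : Set.range gen = {z^3, y^2*z, x^2*z, y^3, x*y^2, x^2*y, x^3 - y*z^2} := by
  ext f
  simp [gen]
  tauto

lemma gen_eq : gen = ![monomial (expo 0 0 3) 1, monomial (expo 0 2 1) 1, monomial (expo 2 0 1) 1,
    monomial (expo 0 3 0) 1, monomial (expo 1 2 0) 1, monomial (expo 2 1 0) 1,
    monomial (expo 3 0 0) 1 - monomial (expo 0 1 2) 1] := by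
  simp [gen, monomial_expo]

/-- The `ℚ`-linear map extracting the seven coefficients at `leadExpo`. -/
noncomputable def lead : MvPolynomial (Fin 3) ℚ →ₗ[ℚ] (Fin 7 → ℚ) :=
  LinearMap.pi fun i => lcoeff ℚ (leadExpo i)

lemma lead_gen (i : Fin 7) : lead (gen i) = Pi.single i 1 := by
  ext j
  rw [gen_eq]
  fin_cases i <;> fin_cases j <;>
    simp [lead, leadExpo, coeff_monomial, expo_inj]

lemma gen_mem (i : Fin 7) : gen i ∈ idealOfVars (Fin 3) ℚ ^ 3 := by
  have h (a b c : ℕ) (habc : 3 ≤ a + b + c) :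
      monomial (expo a b c) (1 : ℚ) ∈ idealOfVars (Fin 3) ℚ ^ 3 := by
    rw [monomial_mem_pow_idealOfVars_iff _ _ one_ne_zero, degree_expo]
    exact habc
  rw [gen_eq]
  fin_cases i
  · exact h _ _ _ (by norm_num)
  · exact h _ _ _ (by norm_num)
  · exact h _ _ _ (by norm_num)
  · exact h _ _ _ (by norm_num)
  · exact h _ _ _ (by norm_num)
  · exact h _ _ _ (by norm_num)
  · exact sub_mem (h _ _ _ (by norm_num)) (h _ _ _ (by norm_num))

/-- On elements of order at least `n`, the ring acts on degree-`n` coefficients through its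
constant terms. -/
lemma coeff_mul_of_mem {n : ℕ} {a f : MvPolynomial (Fin 3) ℚ}
    (hf : f ∈ idealOfVars (Fin 3) ℚ ^ n) {e : Fin 3 →₀ ℕ} (he : e.degree = n) :
    coeff e (a * f) = coeff 0 a * coeff e f := by
  classical
  rw [mem_pow_idealOfVars_iff'] at hf
  rw [coeff_mul, Finset.sum_eq_single (0, e)]
  · rintro ⟨u, v⟩ huv hne
    rw [Finset.HasAntidiagonal.mem_antidiagonal] at huv
    have hu : u ≠ 0 := by
      rintro rfl
      exact hne (by simpa using huv)
    have hdeg : u.degree + v.degree = n := by rw [← he, ← huv, map_add]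
    have hpos : u.degree ≠ 0 := fun h => hu ((Finsupp.degree_eq_zero_iff u).1 h)
    simp only
    rw [hf v (by omega), mul_zero]
  · intro h
    simp at h

lemma lead_mul {a f : MvPolynomial (Fin 3) ℚ} (hf : f ∈ idealOfVars (Fin 3) ℚ ^ 3) :
    lead (a * f) = coeff 0 a • lead f := by
  ext i
  have he : (leadExpo i).degree = 3 := by
    fin_cases i <;> simp [leadExpo, degree_expo]
  simpa [lead] using coeff_mul_of_mem (a := a) hf he

lemma seven_le_card (s : Finset (MvPolynomial (Fin 3) ℚ))
    (hs : Ideal.span (s : Set (MvPolynomial (Fin 3) ℚ)) = Ideal.span (Set.range gen)) :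
    7 ≤ s.card := by
  classical
  have hle : Ideal.span (s : Set (MvPolynomial (Fin 3) ℚ)) ≤ idealOfVars (Fin 3) ℚ ^ 3 := by
    rw [hs, Ideal.span_le]
    rintro _ ⟨i, rfl⟩
    exact gen_mem i
  have hmem (f : MvPolynomial (Fin 3) ℚ)
      (hf : f ∈ Ideal.span (s : Set (MvPolynomial (Fin 3) ℚ))) :
      lead f ∈ Submodule.span ℚ (s.image lead : Set (Fin 7 → ℚ)) := by
    induction hf using Submodule.span_induction with
    | mem f hf => exact Submodule.subset_span (by simpa using ⟨f, hf, rfl⟩)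
    | zero => simp
    | add f g _ _ hf hg => rw [map_add]; exact add_mem hf hg
    | smul a f hf ih =>
      rw [smul_eq_mul, lead_mul (hle hf)]
      exact Submodule.smul_mem _ _ ih
  have htop : Submodule.span ℚ (s.image lead : Set (Fin 7 → ℚ)) = ⊤ := by
    rw [eq_top_iff, ← (Pi.basisFun ℚ (Fin 7)).span_eq, Submodule.span_le]
    rintro _ ⟨i, rfl⟩
    rw [Pi.basisFun_apply, ← lead_gen]
    exact hmem _ (hs ▸ Ideal.subset_span ⟨i, rfl⟩)
  have h := finrank_span_finset_le_card (R := ℚ) (s.image lead)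
  rw [Set.finrank, htop, finrank_top, Module.finrank_fin_fun] at h
  exact h.trans Finset.card_image_le

lemma minNumGens_span_gen : minNumGens (Ideal.span (Set.range gen)) = 7 := by
  classical
  have hmem : (Finset.univ.image gen).card ∈
      {n : ℕ | ∃ s : Finset (MvPolynomial (Fin 3) ℚ), s.card = n ∧
        Ideal.span (s : Set (MvPolynomial (Fin 3) ℚ)) = Ideal.span (Set.range gen)} :=
    ⟨_, rfl, by simp⟩
  apply le_antisymm
  · exact (Nat.sInf_le hmem).trans (Finset.card_image_le.trans (by simp))
  · obtain ⟨s, hcard, hs⟩ := Nat.sInf_mem ⟨_, hmem⟩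
    rw [minNumGens, ← hcard]
    exact seven_le_card s hs

/-- The prime ideal of polynomials killed by substituting `v` for the variables. -/
noncomputable def kerPrime (v : Fin 3 → MvPolynomial (Fin 3) ℚ) :
    PrimeSpectrum (MvPolynomial (Fin 3) ℚ) :=
  ⟨RingHom.ker (aeval v : MvPolynomial (Fin 3) ℚ →ₐ[ℚ] _), RingHom.ker_isPrime _⟩

lemma mem_kerPrime {v : Fin 3 → MvPolynomial (Fin 3) ℚ} {f : MvPolynomial (Fin 3) ℚ} :
    f ∈ (kerPrime v).asIdeal ↔ aeval v f = 0 := Iff.rfl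

/-- Substituting `v` does not change residues modulo `p` when `p` contains every `X i - v i`. -/
lemma kerPrime_le {v : Fin 3 → MvPolynomial (Fin 3) ℚ} {p : PrimeSpectrum (MvPolynomial (Fin 3) ℚ)}
    (h : ∀ i, X i - v i ∈ p.asIdeal) : kerPrime v ≤ p := by
  have hcomp : (Ideal.Quotient.mkₐ ℚ p.asIdeal).comp (aeval v) = Ideal.Quotient.mkₐ ℚ p.asIdeal := by
    ext i
    simpa using ((Ideal.Quotient.eq).2 (h i)).symm
  intro f hf
  have := DFunLike.congr_fun hcomp f
  rw [mem_kerPrime] at hf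
  rw [AlgHom.comp_apply, hf, map_zero] at this
  exact Ideal.Quotient.eq_zero_iff_mem.1 this.symm

lemma three_le_height_s11 {p : PrimeSpectrum (MvPolynomial (Fin 3) ℚ)}
    (hx : x ∈ p.asIdeal) (hy : y ∈ p.asIdeal) (hz : z ∈ p.asIdeal) : 3 ≤ Order.height p := by
  have lt_of {q r : PrimeSpectrum (MvPolynomial (Fin 3) ℚ)} (hle : q ≤ r)
      (f : MvPolynomial (Fin 3) ℚ) (hr : f ∈ r.asIdeal) (hq : f ∉ q.asIdeal) : q < r :=
    lt_of_le_of_ne hle fun h => hq (h ▸ hr)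
  have h₁ : kerPrime ![x, y, z] < kerPrime ![0, y, z] :=
    lt_of (kerPrime_le fun i => by fin_cases i <;> simp) x
      (by simp [mem_kerPrime]) (by simp [mem_kerPrime])
  have h₂ : kerPrime ![0, y, z] < kerPrime ![0, 0, z] :=
    lt_of (kerPrime_le fun i => by fin_cases i <;> simp [mem_kerPrime]) y
      (by simp [mem_kerPrime]) (by simp [mem_kerPrime])
  have h₃ : kerPrime ![0, 0, z] < p :=
    lt_of (kerPrime_le fun i => by fin_cases i <;> simp [hx, hy]) z hz
      (by simp [mem_kerPrime])
  calc (3 : ℕ∞) = 0 + 1 + 1 + 1 := by norm_num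
    _ ≤ Order.height (kerPrime ![x, y, z]) + 1 + 1 + 1 := by gcongr; exact zero_le
    _ ≤ Order.height (kerPrime ![0, y, z]) + 1 + 1 := by
      gcongr; exact Order.height_add_one_le h₁
    _ ≤ Order.height (kerPrime ![0, 0, z]) + 1 := by
      gcongr; exact Order.height_add_one_le h₂
    _ ≤ Order.height p := Order.height_add_one_le h₃

lemma idealHeight_span_gen : idealHeight (Ideal.span (Set.range gen)) = 3 := by
  have hgen (i : Fin 7) : gen i ∈ Ideal.span (Set.range gen) := Ideal.subset_span ⟨i, rfl⟩
  apply le_antisymm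
  · refine (iInf₂_le (kerPrime 0) ?_).trans (height_le_three _)
    rw [Set.mem_ofPred_eq, Ideal.span_le]
    rintro _ ⟨i, rfl⟩
    fin_cases i <;> simp [gen, mem_kerPrime]
  · refine le_iInf₂ fun p hp => ?_
    have hz : z ∈ p.asIdeal := p.2.mem_of_pow_mem 3 (hp (hgen 0))
    have hy : y ∈ p.asIdeal := p.2.mem_of_pow_mem 3 (hp (hgen 3))
    have hx : x ∈ p.asIdeal := by
      refine p.2.mem_of_pow_mem 3 ?_
      have h6 : x ^ 3 - y * z ^ 2 ∈ p.asIdeal := hp (hgen 6)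
      have h := add_mem h6 (Ideal.mul_mem_right (z ^ 2) _ hy)
      convert h using 1
      ring
    exact three_le_height_s11 hx hy hz

lemma finite_quotient_s11 : FiniteDimensional ℚ
    (MvPolynomial (Fin 3) ℚ ⧸ Ideal.span (Set.range gen)) := by
  set I := Ideal.span (Set.range gen)
  have hgen (i : Fin 7) : gen i ∈ I := Ideal.subset_span ⟨i, rfl⟩
  have hx : x ^ 5 ∈ I := by
    have h := add_mem (Ideal.mul_mem_left I (x ^ 2) (hgen 6))
      (Ideal.mul_mem_right (z ^ 2) I (hgen 5))
    simp only [gen, Matrix.cons_val] at h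
    convert h using 1
    ring
  have hy : y ^ 3 ∈ I := hgen 3
  have hz : z ^ 3 ∈ I := hgen 0
  have hpow {f : MvPolynomial (Fin 3) ℚ} {n : ℕ} (hn : 0 < n) (hf : f ^ n ∈ I) :
      IsIntegral ℚ (Ideal.Quotient.mk I f) := by
    refine IsIntegral.of_pow hn ?_
    rw [← map_pow, Ideal.Quotient.eq_zero_iff_mem.2 hf]
    exact isIntegral_zero
  have hint : Algebra.IsIntegral ℚ (MvPolynomial (Fin 3) ℚ ⧸ I) := by
    refine ⟨fun q => ?_⟩
    obtain ⟨f, rfl⟩ := Ideal.Quotient.mk_surjective q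
    induction f using MvPolynomial.induction_on with
    | C a => exact isIntegral_algebraMap (R := ℚ) (x := a)
    | add f g hf hg => rw [map_add]; exact hf.add hg
    | mul_X f i hf =>
      rw [map_mul]
      refine hf.mul ?_
      fin_cases i
      · exact hpow (by norm_num) hx
      · exact hpow (by norm_num) hy
      · exact hpow (by norm_num) hz
  exact Algebra.IsIntegral.finite

theorem stmt_11 (I : Ideal (MvPolynomial (Fin 3) ℚ))
    (hI : I = Ideal.span {z^3, y^2*z, x^2*z, y^3, x*y^2, x^2*y, x^3 - y*z^2}) :
    idealHeight I = 3 ∧ minNumGens I = 7 ∧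
    FiniteDimensional ℚ (MvPolynomial (Fin 3) ℚ ⧸ I) := by
  rw [← range_gen] at hI
  subst hI
  exact ⟨idealHeight_span_gen, minNumGens_span_gen, finite_quotient_s11⟩
end
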